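/- Every 2-connected graph on n vertices with minimum degree δ ≥ (n + κ)/3, where κ is its connectivity, is hamiltonian. -/

import Mathlib

open SimpleGraph

variable {V : Type*}

/-- `G` is `k`-connected: more than `k` vertices and removing fewer than `k`
vertices leaves a connected graph. -/
def KConnected (G : SimpleGraph V) [Fintype V] [DecidableEq V] (k : ℕ) : Prop :=
  k < Fintype.card V ∧
    ∀ S : Finset V, S.card < k → (G.induce ((↑S : Set V)ᶜ)).Connected

/-- vertex connectivity `κ`. -/
noncomputable def connectivity (G : SimpleGraph V) [Fintype V] [DecidableEq V] : ℕ :=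
  sSup {k | KConnected G k}

/-- independence number `α`. -/
noncomputable def indepNumber (G : SimpleGraph V) [Fintype V] [DecidableEq V] : ℕ :=
  sSup {k | ∃ s : Finset V, (∀ u ∈ s, ∀ v ∈ s, ¬ G.Adj u v) ∧ s.card = k}

/-- circumference `c`: length of a longest cycle. -/
noncomputable def circumference (G : SimpleGraph V) [Fintype V] [DecidableEq V] : ℕ :=
  sSup {n | ∃ (v : V) (w : G.Walk v v), w.IsCycle ∧ w.length = n}

/-- `w` is a longest cycle of `G`. -/
def IsLongestCycle {G : SimpleGraph V} {v : V} (w : G.Walk v v) : Prop :=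
  w.IsCycle ∧ ∀ (u : V) (w' : G.Walk u u), w'.IsCycle → w'.length ≤ w.length

/-- dominating cycle: every edge has an endpoint on the cycle. -/
def IsDominatingCycle {G : SimpleGraph V} {v : V} (w : G.Walk v v) : Prop :=
  w.IsCycle ∧ ∀ x y, G.Adj x y → x ∈ w.support ∨ y ∈ w.support

/-- generalized cycle of length `n` with vertex set `W`: single vertices are
cycles of length 1, edges are cycles of length 2. -/
def ExtCycle (G : SimpleGraph V) (W : Set V) (n : ℕ) : Prop :=
  (n = 1 ∧ ∃ v : V, W = {v}) ∨
  (n = 2 ∧ ∃ u v : V, G.Adj u v ∧ W = {u, v}) ∨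
  (3 ≤ n ∧ ∃ (v : V) (w : G.Walk v v), w.IsCycle ∧ w.length = n ∧
      W = {x | x ∈ w.support})

/-- `p̄`: the length of a longest path in `G \ C`. -/
noncomputable def pathBar (G : SimpleGraph V) [Fintype V] [DecidableEq V] {v : V} (w : G.Walk v v) : ℕ :=
  sSup {n | ∃ (a b : {x : V | x ∉ w.support})
      (p : (G.induce {x : V | x ∉ w.support}).Walk a b), p.IsPath ∧ p.length = n}

/-- `c̄`: the length of a longest (generalized) cycle in `G \ C`. -/
noncomputable def cycBar (G : SimpleGraph V) [Fintype V] [DecidableEq V] {v : V} (w : G.Walk v v) : ℕ :=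
  sSup {n | ∃ W, ExtCycle (G.induce {x : V | x ∉ w.support}) W n}

/-- `CD_m`-cycle: every (generalized) cycle of length at least `m` meets `w`. -/
def IsCDCycle (G : SimpleGraph V) {v : V} (w : G.Walk v v) (m : ℕ) : Prop :=
  w.IsCycle ∧ ∀ (W : Set V) (n : ℕ), ExtCycle G W n → m ≤ n → ∃ x ∈ W, x ∈ w.support

/-! Suppose a longest cycle `C` misses a vertex. Exchanging an arc of `C` for an ear shows that
every ear of `C` has length at most `|C| / 2`, and that the feet of an ear of length `k` are at
distance at least `k` along `C`.

Dirac's bound `2δ ≤ |C|`: let `p` be a longest path off `C` starting next to some `c ∈ C`. If the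
end of `p` has a neighbour on `C` other than `c`, counting the gaps along `C` gives the bound.
Otherwise all its neighbours lie on `c` followed by `p`, and the rotations of this path, together
with the absence of cut vertices, yield an ear of length at least `δ`.

Nash-Williams' argument: counting the gaps between the neighbours on `C` of the two ends of a
longest path off `C` shows, as `3δ ≥ n + 2`, that this path is a single vertex `x`, so `N(x) ⊆ C`.
No two successors along `C` of neighbours of `x` are adjacent, or `C` could be extended through
`x`; so together with `x` they form an independent set of more than `δ` vertices. Given such a
set, counting around a separator of size `κ` gives `3δ < n + κ`. -/

open Walk

variable {G : SimpleGraph V}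

theorem start_notMem_tail_support {u v : V} {p : G.Walk u v} (hp : p.IsPath) :
    u ∉ p.support.tail := by
  have := hp.support_nodup
  rw [← cons_tail_support] at this
  exact (List.nodup_cons.1 this).1

theorem isPath_append {u v w : V} {p : G.Walk u v} {q : G.Walk v w} (hp : p.IsPath)
    (hq : q.IsPath) (hpq : ∀ x ∈ p.support, x ∈ q.support → x = v) : (p.append q).IsPath := by
  rw [isPath_def, support_append, List.nodup_append']
  refine ⟨hp.support_nodup, hq.support_nodup.tail, fun x hxp hxq => ?_⟩
  obtain rfl := hpq x hxp (List.mem_of_mem_tail hxq)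
  exact start_notMem_tail_support hq hxq

theorem isCycle_append_comm {u v : V} {p : G.Walk u v} {q : G.Walk v u}
    (h : (p.append q).IsCycle) : (q.append p).IsCycle := by
  have hlen := h.three_le_length
  rw [isCycle_def, isTrail_def, edges_append, tail_support_append] at h ⊢
  refine ⟨List.perm_append_comm.nodup h.1, fun hnil => ?_, List.perm_append_comm.nodup h.2.2⟩
  have := congrArg Walk.length hnil
  simp only [length_append, length_nil] at this hlen
  omega

theorem exists_eq_append_of_getVert_eq {u v x : V} {w : G.Walk u v} {i : ℕ} (hi : i ≤ w.length)
    (hx : w.getVert i = x) :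
    ∃ (p : G.Walk u x) (q : G.Walk x v), w = p.append q ∧ p.length = i := by
  subst hx
  exact ⟨w.take i, w.drop i, (w.append_take_drop_eq i).symm, by simpa using hi⟩

theorem exists_eq_append_cons_of_getVert_eq {u v x y : V} {w : G.Walk u v} {i : ℕ}
    (hi : i < w.length) (hx : w.getVert i = x) (hy : w.getVert (i + 1) = y) :
    ∃ (p : G.Walk u x) (h : G.Adj x y) (q : G.Walk y v),
      w = p.append (cons h q) ∧ p.length = i := by
  obtain ⟨p, q, rfl, rfl⟩ := exists_eq_append_of_getVert_eq hi.le hx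
  cases q with
  | nil => simp at hi
  | cons h q =>
    obtain rfl : _ = y := by simpa [getVert_append] using hy
    exact ⟨p, h, q, rfl, rfl⟩

/-- `p` is an ear of the vertex set `C`: a path between distinct vertices of `C` with no inner
vertex in `C`. An edge joining two vertices of `C` counts as an ear. -/
structure IsEar (C : Set V) {u v : V} (p : G.Walk u v) : Prop where
  isPath : p.IsPath
  start_mem : u ∈ C
  end_mem : v ∈ C
  ne : u ≠ v
  eq_or_eq : ∀ x ∈ p.support, x ∈ C → x = u ∨ x = v

namespace IsEar

variable {C : Set V} {u v : V} {p : G.Walk u v}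

protected theorem reverse (h : IsEar C p) : IsEar C p.reverse where
  isPath := h.isPath.reverse
  start_mem := h.end_mem
  end_mem := h.start_mem
  ne := h.ne.symm
  eq_or_eq x hx hxC := (h.eq_or_eq x (by simpa using hx) hxC).symm

end IsEar

namespace IsLongestCycle

theorem append_comm {u v : V} {p : G.Walk u v} {q : G.Walk v u}
    (h : IsLongestCycle (p.append q)) : IsLongestCycle (q.append p) :=
  ⟨isCycle_append_comm h.1, by simpa [add_comm] using h.2⟩

theorem exists_of_mem {u v : V} {w : G.Walk v v} (h : IsLongestCycle w) (hu : u ∈ w.support) :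
    ∃ w' : G.Walk u u, IsLongestCycle w' ∧ w'.length = w.length ∧
      {x | x ∈ w'.support} = {x | x ∈ w.support} := by
  obtain ⟨p, q, rfl⟩ := mem_support_iff_exists_append.1 hu
  refine ⟨q.append p, h.append_comm, by simp [add_comm], ?_⟩
  ext x
  simp [or_comm]

theorem length_le_of_isEar {u v : V} {p q : G.Walk u v} {r : G.Walk v u}
    (h : IsLongestCycle (q.append r)) (hp : IsEar {x | x ∈ (q.append r).support} p) :
    p.length ≤ q.length := by
  have hq : ¬ q.Nil := not_nil_of_ne hp.ne
  by_contra! hlt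
  have hr : r.IsPath := h.1.isPath_of_append_right hq
  have hdisj : p.support.tail.Disjoint r.support.tail := by
    intro x hxp hxr
    have hxw : x ∈ (q.append r).support :=
      (mem_support_append_iff _ _).2 (.inr (List.mem_of_mem_tail hxr))
    obtain rfl | rfl := hp.eq_or_eq x (List.mem_of_mem_tail hxp) hxw
    · exact start_notMem_tail_support hp.isPath hxp
    · exact start_notMem_tail_support hr hxr
  have hq_pos := not_nil_iff_lt_length.1 hq
  have hle := h.2 _ _ (hp.isPath.isCycle_append hr hdisj (.inl (by omega)))
  simp only [length_append] at hle
  omega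

theorem two_mul_length_le_of_isEar {u v a : V} {w : G.Walk a a} {p : G.Walk u v}
    (h : IsLongestCycle w) (hp : IsEar {x | x ∈ w.support} p) : 2 * p.length ≤ w.length := by
  obtain ⟨w', hw', hlen, hsupp⟩ := h.exists_of_mem hp.start_mem
  rw [← hsupp] at hp
  obtain ⟨q, r, rfl⟩ := mem_support_iff_exists_append.1 hp.end_mem
  have hq := hw'.length_le_of_isEar hp
  have hr := hw'.append_comm.length_le_of_isEar (p := p.reverse) <| by
    convert hp.reverse using 1
    ext x
    simp [or_comm]
  rw [length_reverse] at hr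
  rw [← hlen, length_append]
  omega

theorem add_length_le_of_isEar {u v a : V} {w : G.Walk a a} {p : G.Walk u v} {i j : ℕ}
    (h : IsLongestCycle w) (hp : IsEar {x | x ∈ w.support} p) (hij : i ≤ j) (hj : j ≤ w.length)
    (hi_eq : w.getVert i = u) (hj_eq : w.getVert j = v) : i + p.length ≤ j := by
  obtain ⟨p₀, q, rfl, rfl⟩ := exists_eq_append_of_getVert_eq (hij.trans hj) hi_eq
  have hj_sub : q.getVert (j - p₀.length) = v := by
    simpa [getVert_append, hij.not_gt] using hj_eq
  rw [length_append] at hj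
  obtain ⟨q₁, q₂, rfl, hlen⟩ := exists_eq_append_of_getVert_eq (by omega) hj_sub
  have hrot : IsLongestCycle (q₁.append (q₂.append p₀)) := append_assoc .. ▸ h.append_comm
  have := hrot.length_le_of_isEar (p := p) <| by
    convert hp using 1
    ext x
    simp only [Set.mem_ofPred, mem_support_append_iff]
    tauto
  omega

theorem not_adj_succ_of_adj {v a b a' b' : V} {p : G.Walk a' b} {q : G.Walk b' a}
    {ha : G.Adj a a'} {hb : G.Adj b b'} (h : IsLongestCycle (cons ha (p.append (cons hb q))))
    (hv : v ∉ (cons ha (p.append (cons hb q))).support) (hva : G.Adj v a) (hvb : G.Adj v b) :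
    ¬ G.Adj a' b' := by
  intro hadj
  have hnodup : (p.support ++ q.support).Nodup := by
    simpa [support_append] using h.1.support_nodup
  obtain ⟨hv_p, hv_q⟩ : v ∉ p.support ∧ v ∉ q.support := by
    simp only [support_cons, support_append, List.tail_cons, List.mem_cons, List.mem_append] at hv
    tauto
  let r : G.Walk a b := q.reverse.append (cons hadj.symm p)
  have hr : r.IsPath := by
    refine .mk' ?_
    simpa [r, support_append] using
      ((List.reverse_perm _).append_right _ |>.trans List.perm_append_comm).nodup_iff.2 hnodup
  have hab : b ≠ a := fun hba =>
    (List.nodup_append.1 hnodup).2.2 _ p.end_mem_support _ q.end_mem_support hba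
  have hdetour : (cons hvb.symm (cons hva nil)).IsPath := by
    simp [hvb.ne', hva.ne, hab]
  have hdisj : (cons hvb.symm (cons hva nil)).support.tail.Disjoint r.support.tail := by
    have ha_r := start_notMem_tail_support hr
    have hv_r : v ∉ r.support := by simp [r, support_append, hv_p, hv_q]
    simpa [ha_r] using fun hmem => hv_r (List.mem_of_mem_tail hmem)
  have hle := h.2 _ _ (hdetour.isCycle_append hr hdisj (.inl (by simp)))
  simp only [r, length_append, length_cons, length_nil, length_reverse] at hle
  omega

theorem not_adj_getVert_succ_of_adj {u v : V} {w : G.Walk u u} {i j : ℕ} (h : IsLongestCycle w)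
    (hv : v ∉ w.support) (hij : i < j) (hj : j < w.length) (hi_adj : G.Adj v (w.getVert i))
    (hj_adj : G.Adj v (w.getVert j)) : ¬ G.Adj (w.getVert (i + 1)) (w.getVert (j + 1)) := by
  generalize ha : w.getVert i = a at *
  generalize hb : w.getVert j = b at *
  generalize ha' : w.getVert (i + 1) = a' at *
  generalize hb' : w.getVert (j + 1) = b' at *
  obtain ⟨p, hadj_a, q, rfl, rfl⟩ := exists_eq_append_cons_of_getVert_eq (hij.trans hj) ha ha'
  obtain ⟨k, rfl⟩ := Nat.exists_eq_add_of_lt hij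
  have hqb : q.getVert k = b := by
    simpa [getVert_append, add_assoc] using hb
  have hqb' : q.getVert (k + 1) = b' := by
    simpa [getVert_append, add_assoc] using hb'
  rw [length_append, length_cons] at hj
  obtain ⟨q₁, hadj_b, q₂, rfl, -⟩ := exists_eq_append_cons_of_getVert_eq (by omega) hqb hqb'
  have hrot : IsLongestCycle (cons hadj_a (q₁.append (cons hadj_b (q₂.append p)))) := by
    simpa [← append_assoc] using h.append_comm
  refine hrot.not_adj_succ_of_adj ?_ hi_adj hj_adj
  simp only [mem_support_append_iff, support_cons, List.mem_cons] at hv ⊢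
  tauto

end IsLongestCycle

open Finset in
theorem sum_le_of_forall_add_le {U : Finset ℕ} {g : ℕ → ℕ} {n : ℕ} (hn : ∀ i ∈ U, i + g i ≤ n)
    (h : ∀ i ∈ U, ∀ j ∈ U, i < j → i + g i ≤ j) : ∑ i ∈ U, g i ≤ n := by
  have hdisj : (U : Set ℕ).PairwiseDisjoint fun i => Ico i (i + g i) := by
    intro i hi j hj hij
    refine disjoint_left.2 fun x hxi hxj => ?_
    rw [mem_Ico] at hxi hxj
    rcases hij.lt_or_gt with hlt | hlt
    · have := h i hi j hj hlt
      omega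
    · have := h j hj i hi hlt
      omega
  have hsub : U.biUnion (fun i => Ico i (i + g i)) ⊆ range n := by
    intro x hx
    obtain ⟨i, hi, hxi⟩ := mem_biUnion.1 hx
    have := hn i hi
    rw [mem_Ico] at hxi
    exact mem_range.2 (by omega)
  simpa [card_biUnion hdisj] using card_le_card hsub

theorem two_mul_card_add_mul_card_le {U M : Finset ℕ} {k n : ℕ} (hMU : M ⊆ U)
    (hn : ∀ i ∈ U, i < n) (hU : ∀ i ∈ U, ∀ j ∈ insert n U, i < j → i + 2 ≤ j)
    (hM : ∀ i ∈ M, ∀ j ∈ insert n U, i < j → i + (k + 2) ≤ j) :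
    2 * U.card + k * M.card ≤ n := by
  have hblock : ∀ i ∈ U, ∀ j ∈ insert n U, i < j → i + (2 + if i ∈ M then k else 0) ≤ j := by
    intro i hi j hj hij
    split_ifs with hiM
    · have := hM i hiM j hj hij
      omega
    · exact hU i hi j hj hij
  have hsum := sum_le_of_forall_add_le
    (fun i hi => hblock i hi n (Finset.mem_insert_self n U) (hn i hi))
    fun i hi j hj => hblock i hi j (Finset.mem_insert_of_mem hj)
  rwa [Finset.sum_add_distrib, Finset.sum_const, Finset.sum_ite_mem, Finset.sum_const,
    Finset.inter_eq_right.2 hMU, smul_eq_mul, smul_eq_mul, mul_comm _ 2, mul_comm _ k] at hsum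

section GapCounting

variable {X Y : ℕ → Prop} {k n : ℕ}

theorem exists_forall_gap_of_lt (hgap : ∀ i j, i < j → j ≤ n → X i → Y j → i + k ≤ j) {a b : ℕ}
    (ha : X a) (hb : Y b) (hab : a < b) (hbn : b ≤ n) :
    ∃ i, a ≤ i ∧ i < b ∧ X i ∧ ∀ j, i < j → X j ∨ Y j → i + k ≤ j := by
  by_cases hbetween : ∃ j, a < j ∧ j < b ∧ (X j ∨ Y j)
  · obtain ⟨j, haj, hjb, hj | hj⟩ := hbetween
    · obtain ⟨i, hji, hib, hi⟩ := exists_forall_gap_of_lt hgap hj hb hjb hbn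
      exact ⟨i, haj.le.trans hji, hib, hi⟩
    · obtain ⟨i, hai, hij, hi⟩ := exists_forall_gap_of_lt hgap ha hj haj (hjb.le.trans hbn)
      exact ⟨i, hai, hij.trans hjb, hi⟩
  · push Not at hbetween
    refine ⟨a, le_rfl, hab, ha, fun j haj hj => ?_⟩
    have hbj : b ≤ j := by
      by_contra! hjb
      have := hbetween j haj hjb
      tauto
    exact (hgap a b hab hbn ha hb).trans hbj
termination_by b - a

theorem two_mul_card_add_mul_max_le [DecidablePred X] [DecidablePred Y] {y : ℕ} (h0 : X 0)
    (hn : X n) (hy : Y y) (hy0 : 0 < y) (hyn : y < n)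
    (htwo : ∀ i j, i < j → j ≤ n → X i ∨ Y i → X j ∨ Y j → i + 2 ≤ j)
    (hXY : ∀ i j, i < j → j ≤ n → X i → Y j → i + (k + 2) ≤ j)
    (hYX : ∀ i j, i < j → j ≤ n → Y i → X j → i + (k + 2) ≤ j) :
    2 * (Finset.range n |>.filter fun i => X i ∨ Y i).card +
      k * max 2 (Finset.range n |>.filter fun i => X i ∧ Y i).card ≤ n := by
  classical
  let U := Finset.range n |>.filter fun i => X i ∨ Y i
  let M := U.filter fun i => ∀ j, i < j → j ≤ n → X j ∨ Y j → i + (k + 2) ≤ j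
  have hmem_U : ∀ {i}, i ∈ U ↔ i < n ∧ (X i ∨ Y i) := by simp [U]
  have hinsert : ∀ {i}, i ∈ insert n U → i ≤ n ∧ (X i ∨ Y i) := by
    intro i hi
    obtain rfl | hi := Finset.mem_insert.1 hi
    · exact ⟨le_rfl, .inl hn⟩
    · exact ⟨(hmem_U.1 hi).1.le, (hmem_U.1 hi).2⟩
  have hsub : (Finset.range n |>.filter fun i => X i ∧ Y i) ⊆ M := by
    intro i hi
    simp only [Finset.mem_filter, Finset.mem_range] at hi
    obtain ⟨hin, hXi, hYi⟩ := hi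
    refine Finset.mem_filter.2 ⟨hmem_U.2 ⟨hin, .inl hXi⟩, fun j hij hjn hj => ?_⟩
    exact hj.elim (hYX i j hij hjn hYi) (hXY i j hij hjn hXi)
  have htwo_le : 2 ≤ M.card := by
    obtain ⟨i, -, hiy, hXi, hi⟩ := exists_forall_gap_of_lt hXY h0 hy hy0 hyn.le
    obtain ⟨j, hyj, hjn, hYj, hj⟩ := exists_forall_gap_of_lt hYX hy hn hyn le_rfl
    refine Finset.one_lt_card.2 ⟨i, ?_, j, ?_, (hiy.trans_le hyj).ne⟩
    · exact Finset.mem_filter.2 ⟨hmem_U.2 ⟨hiy.trans hyn, .inl hXi⟩, fun l hl _ => hi l hl⟩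
    · exact Finset.mem_filter.2
        ⟨hmem_U.2 ⟨hjn, .inr hYj⟩, fun l hl _ hl' => hj l hl hl'.symm⟩
  calc 2 * U.card + k * max 2 _
    _ ≤ 2 * U.card + k * M.card := by
      gcongr
      exact max_le htwo_le (Finset.card_le_card hsub)
    _ ≤ n := by
      refine two_mul_card_add_mul_card_le (Finset.filter_subset _ _)
        (fun i hi => (hmem_U.1 hi).1) (fun i hi j hj hij => ?_) fun i hi j hj hij => ?_
      · exact htwo i j hij (hinsert hj).1 (hmem_U.1 hi).2 (hinsert hj).2
      · exact (Finset.mem_filter.1 hi).2 j hij (hinsert hj).1 (hinsert hj).2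

end GapCounting

theorem exists_getVert_eq_of_mem_support {u x : V} {w : G.Walk u u} (hw : ¬ w.Nil)
    (hx : x ∈ w.support) : ∃ i < w.length, w.getVert i = x := by
  obtain ⟨i, rfl, hi⟩ := mem_support_iff_exists_getVert.1 hx
  obtain hlt | rfl := hi.lt_or_eq
  · exact ⟨i, hlt, rfl⟩
  · exact ⟨0, not_nil_iff_lt_length.1 hw, by simp⟩

theorem card_le_card_filter_getVert_mem [DecidableEq V] {u : V} {w : G.Walk u u} {X : Finset V}
    (hw : ¬ w.Nil) (hX : ∀ x ∈ X, x ∈ w.support) :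
    X.card ≤ (Finset.range w.length |>.filter fun i => w.getVert i ∈ X).card := by
  refine Finset.card_le_card_of_surjOn w.getVert fun x hx => ?_
  obtain ⟨i, hi, rfl⟩ := exists_getVert_eq_of_mem_support hw (hX x hx)
  exact ⟨i, by simpa using ⟨hi, hx⟩, rfl⟩

theorem eq_zero_and_eq_length_of_getVert_eq {u : V} {w : G.Walk u u} (hw : w.IsCycle) {i j : ℕ}
    (hij : i < j) (hj : j ≤ w.length) (heq : w.getVert i = w.getVert j) :
    i = 0 ∧ j = w.length := by
  obtain rfl | hi := Nat.eq_zero_or_pos i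
  · have hlen : w.getVert w.length = w.getVert j := by simpa using heq
    exact ⟨rfl, (hw.getVert_injOn ⟨by omega, le_rfl⟩ ⟨hij, hj⟩ hlen).symm⟩
  · exact absurd (hw.getVert_injOn ⟨hi, by omega⟩ ⟨by omega, hj⟩ heq) hij.ne

namespace IsLongestCycle

theorem add_le_of_exists_isEar {a : V} {w : G.Walk a a} {i j k : ℕ} (h : IsLongestCycle w)
    (hk : k ≤ w.length) (hij : i < j) (hj : j ≤ w.length)
    (hear : w.getVert i ≠ w.getVert j → ∃ p : G.Walk (w.getVert i) (w.getVert j),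
      IsEar {x | x ∈ w.support} p ∧ k ≤ p.length) : i + k ≤ j := by
  by_cases heq : w.getVert i = w.getVert j
  · obtain ⟨rfl, rfl⟩ := eq_zero_and_eq_length_of_getVert_eq h.1 hij hj heq
    simpa using hk
  · obtain ⟨p, hp, hkp⟩ := hear heq
    have := h.add_length_le_of_isEar hp hij.le hj rfl rfl
    omega

theorem two_mul_card_union_add_mul_max_le [DecidableEq V] {a x₀ y₀ : V} {w : G.Walk a a}
    {X Y : Finset V} {k : ℕ} (h : IsLongestCycle w) (hXY : ∀ x ∈ X ∪ Y, x ∈ w.support)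
    (hx₀ : x₀ ∈ X) (hy₀ : y₀ ∈ Y) (hne : x₀ ≠ y₀)
    (hshort : ∀ u ∈ X ∪ Y, ∀ v ∈ X ∪ Y, u ≠ v →
      ∃ p : G.Walk u v, IsEar {x | x ∈ w.support} p ∧ 2 ≤ p.length)
    (hlong : ∀ u ∈ X, ∀ v ∈ Y, u ≠ v →
      ∃ p : G.Walk u v, IsEar {x | x ∈ w.support} p ∧ k + 2 ≤ p.length) :
    2 * (X ∪ Y).card + k * max 2 (X ∩ Y).card ≤ w.length := by
  obtain ⟨w', hw', hlen, hsupp⟩ := h.exists_of_mem (hXY x₀ (Finset.mem_union_left _ hx₀))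
  have hmem : ∀ x, x ∈ w'.support ↔ x ∈ w.support := Set.ext_iff.1 hsupp
  rw [← hlen]
  rw [← hsupp] at hshort hlong
  have hlong' : ∀ u ∈ Y, ∀ v ∈ X, u ≠ v →
      ∃ p : G.Walk u v, IsEar {x | x ∈ w'.support} p ∧ k + 2 ≤ p.length := by
    intro u hu v hv huv
    obtain ⟨p, hp, hkp⟩ := hlong v hv u hu huv.symm
    exact ⟨p.reverse, hp.reverse, by simpa using hkp⟩
  have hk : k + 2 ≤ w'.length := by
    obtain ⟨p, hp, hkp⟩ := hlong x₀ hx₀ y₀ hy₀ hne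
    have := hw'.two_mul_length_le_of_isEar hp
    omega
  obtain ⟨y, hyn, rfl⟩ := exists_getVert_eq_of_mem_support hw'.1.not_nil
    ((hmem _).2 (hXY y₀ (Finset.mem_union_right _ hy₀)))
  have hy0 : 0 < y := Nat.pos_of_ne_zero fun hy => hne (by simp [hy])
  have hgap := two_mul_card_add_mul_max_le (X := (w'.getVert · ∈ X)) (Y := (w'.getVert · ∈ Y))
    (by simpa using hx₀) (by simpa using hx₀) hy₀ hy0 hyn
    (fun i j hij hj hi hj' => hw'.add_le_of_exists_isEar (by omega) hij hj
      (hshort _ (Finset.mem_union.2 hi) _ (Finset.mem_union.2 hj')))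
    (fun i j hij hj hi hj' => hw'.add_le_of_exists_isEar hk hij hj (hlong _ hi _ hj'))
    (fun i j hij hj hi hj' => hw'.add_le_of_exists_isEar hk hij hj (hlong' _ hi _ hj'))
  have hunion := card_le_card_filter_getVert_mem hw'.1.not_nil fun x hx => (hmem x).2 (hXY x hx)
  have hinter := card_le_card_filter_getVert_mem hw'.1.not_nil (X := X ∩ Y) fun x hx =>
    (hmem x).2 (hXY x (Finset.mem_union_left _ (Finset.mem_inter.1 hx).1))
  simp only [Finset.mem_union, Finset.mem_inter] at hunion hinter
  calc _ ≤ _ := by gcongr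
    _ ≤ w'.length := hgap

end IsLongestCycle

theorem isEar_cons_concat {C : Set V} {u v x y : V} {p : G.Walk x y} (hp : p.IsPath)
    (hpC : ∀ z ∈ p.support, z ∉ C) (hu : u ∈ C) (hv : v ∈ C) (huv : u ≠ v) (hux : G.Adj u x)
    (hyv : G.Adj y v) : IsEar C (cons hux (p.concat hyv)) where
  isPath := by
    refine (hp.concat (fun hvp => hpC v hvp hv) hyv).cons ?_
    simpa using ⟨fun hup => hpC u hup hu, huv⟩
  start_mem := hu
  end_mem := hv
  ne := huv
  eq_or_eq z hz hzC := by
    simp only [support_cons, support_concat, List.mem_cons, List.mem_append] at hz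
    have := hpC z
    grind

namespace IsLongestCycle

variable {a v : V} {w : G.Walk a a}

theorem not_adj_succ {i : ℕ} (h : IsLongestCycle w) (hv : v ∉ w.support) (hi : i < w.length)
    (hvi : G.Adj v (w.getVert i)) : ¬ G.Adj v (w.getVert (i + 1)) := by
  intro hvj
  have hear : IsEar {x | x ∈ w.support} (cons hvi.symm (nil.concat hvj)) :=
    isEar_cons_concat (C := {x | x ∈ w.support}) .nil (by simpa using hv) (w.getVert_mem_support i)
      (w.getVert_mem_support _) (w.adj_getVert_succ hi).ne hvi.symm hvj
  have := h.add_length_le_of_isEar hear i.le_succ hi rfl rfl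
  simp only [length_cons, length_concat, length_nil] at this
  omega

theorem isIndepSet_insert_image_getVert_succ {P : Set ℕ} (h : IsLongestCycle w)
    (hv : v ∉ w.support) (hP : ∀ i ∈ P, i < w.length ∧ G.Adj v (w.getVert i)) :
    G.IsIndepSet (insert v ((fun i => w.getVert (i + 1)) '' P)) := by
  rw [← isClique_compl, isClique_insert, isClique_compl]
  refine ⟨?_, ?_⟩
  · rintro _ ⟨i, hi, rfl⟩ _ ⟨j, hj, rfl⟩ hij
    obtain hlt | rfl | hlt := lt_trichotomy i j
    · exact h.not_adj_getVert_succ_of_adj hv hlt (hP j hj).1 (hP i hi).2 (hP j hj).2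
    · exact absurd rfl hij
    · exact fun hadj =>
        h.not_adj_getVert_succ_of_adj hv hlt (hP i hi).1 (hP j hj).2 (hP i hi).2 hadj.symm
  · rintro _ ⟨i, hi, rfl⟩ hne
    exact (compl_adj ..).2 ⟨hne, h.not_adj_succ hv (hP i hi).1 (hP i hi).2⟩

theorem exists_isIndepSet_of_neighbors_subset [Fintype V] [DecidableRel G.Adj]
    (h : IsLongestCycle w) (hv : v ∉ w.support) (hN : ∀ x, G.Adj v x → x ∈ w.support) :
    ∃ I : Finset V, G.IsIndepSet I ∧ G.degree v < I.card := by
  classical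
  let P := Finset.range w.length |>.filter fun i => w.getVert i ∈ G.neighborFinset v
  have hP : ∀ i ∈ P, i < w.length ∧ G.Adj v (w.getVert i) := by simp [P]
  have hinj : Set.InjOn (fun i => w.getVert (i + 1)) P := by
    intro i hi j hj hij
    have hi_lt := (hP i hi).1
    have hj_lt := (hP j hj).1
    have := h.1.getVert_injOn ⟨by omega, hi_lt⟩ ⟨by omega, hj_lt⟩ hij
    omega
  have hv_image : v ∉ P.image fun i => w.getVert (i + 1) := by
    intro hmem
    obtain ⟨i, -, rfl⟩ := Finset.mem_image.1 hmem
    exact hv (w.getVert_mem_support _)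
  have hcard : G.degree v ≤ P.card := by
    rw [← G.card_neighborFinset_eq_degree]
    exact card_le_card_filter_getVert_mem h.1.not_nil fun x hx => hN x (by simpa using hx)
  refine ⟨insert v (P.image fun i => w.getVert (i + 1)), ?_, ?_⟩
  · simpa using h.isIndepSet_insert_image_getVert_succ hv hP
  · rw [Finset.card_insert_of_notMem hv_image, Finset.card_image_of_injOn hinj]
    omega

end IsLongestCycle

section Separation

variable [Fintype V] [DecidableEq V]

/-- `T` and `T'` are the sides of a separation of `G`: they cover the vertex set, neither is
contained in the other, and every edge lies within one of them. The separator is `T ∩ T'`. -/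
structure IsSeparation (G : SimpleGraph V) (T T' : Finset V) : Prop where
  union_eq : T ∪ T' = Finset.univ
  not_subset_left : ¬ T ⊆ T'
  not_subset_right : ¬ T' ⊆ T
  not_adj : ∀ a ∉ T', ∀ b ∉ T, ¬ G.Adj a b

protected theorem IsSeparation.symm {T T' : Finset V} (h : IsSeparation G T T') :
    IsSeparation G T' T where
  union_eq := Finset.union_comm T' T ▸ h.union_eq
  not_subset_left := h.not_subset_right
  not_subset_right := h.not_subset_left
  not_adj a ha b hb hab := h.not_adj b hb a ha hab.symm

theorem exists_isSeparation_of_not_kConnected {k : ℕ} (hk : ¬ KConnected G (k + 1))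
    (hcard : k + 1 < Fintype.card V) :
    ∃ T T', IsSeparation G T T' ∧ T.card + T'.card ≤ Fintype.card V + k := by
  classical
  obtain ⟨S, hS, hdisc⟩ : ∃ S : Finset V, S.card < k + 1 ∧
      ¬ (G.induce ((S : Set V)ᶜ)).Connected := by
    simpa [KConnected, hcard] using hk
  have hne : Nonempty ((S : Set V)ᶜ : Set V) := by
    obtain ⟨x, -, hx⟩ := Finset.exists_mem_notMem_of_card_lt_card
      (hS.trans (hcard.trans_eq Finset.card_univ.symm))
    exact ⟨x, by simpa using hx⟩
  obtain ⟨⟨a, haS⟩, ⟨b, hbS⟩, hab⟩ : ∃ a b, ¬ (G.induce ((S : Set V)ᶜ)).Reachable a b := by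
    simpa only [connected_iff, Preconnected, hne, and_true, not_forall] using hdisc
  let R : Finset V := Finset.univ.filter fun x =>
    ∃ hx : x ∈ (S : Set V)ᶜ, (G.induce ((S : Set V)ᶜ)).Reachable ⟨a, haS⟩ ⟨x, hx⟩
  have ha : a ∈ R := Finset.mem_filter.2 ⟨Finset.mem_univ a, haS, .rfl⟩
  have hb : b ∉ S ∪ R := by
    rw [Finset.mem_union, not_or]
    exact ⟨by simpa using hbS, fun hbR => hab (Finset.mem_filter.1 hbR).2.2⟩
  refine ⟨S ∪ R, Rᶜ, ⟨?_, fun hsub => ?_, fun hsub => hb ?_, fun x hx y hy hxy => ?_⟩, ?_⟩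
  · rw [Finset.union_assoc, Finset.union_compl, Finset.union_eq_right.2 S.subset_univ]
  · exact Finset.mem_compl.1 (hsub (Finset.mem_union_right _ ha)) ha
  · exact hsub (Finset.mem_compl.2 fun hbR => hb (Finset.mem_union_right _ hbR))
  · obtain ⟨hxS, hax⟩ : ∃ hx : x ∈ (S : Set V)ᶜ,
        (G.induce ((S : Set V)ᶜ)).Reachable ⟨a, haS⟩ ⟨x, hx⟩ := by simpa [R] using hx
    rw [Finset.mem_union, not_or] at hy
    refine hy.2 (Finset.mem_filter.2 ⟨Finset.mem_univ _, by simpa using hy.1, hax.trans ?_⟩)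
    exact Adj.reachable (by simpa using hxy)
  · have := Finset.card_union_le S R
    have := R.card_add_card_compl
    omega

variable [DecidableRel G.Adj] {I T T' : Finset V} {d : ℕ}

theorem card_inter_add_degree_le {v : V} (hI : G.IsIndepSet I) (hv : v ∈ I)
    (hN : G.neighborFinset v ⊆ T) : (T ∩ I).card + G.degree v ≤ T.card := by
  have hdisj : Disjoint (T ∩ I) (G.neighborFinset v) := by
    refine Finset.disjoint_left.2 fun x hx hvx => ?_
    rw [mem_neighborFinset] at hvx
    exact hI hv (Finset.mem_inter.1 hx).2 hvx.ne hvx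
  rw [← card_neighborFinset_eq_degree, ← Finset.card_union_of_disjoint hdisj]
  exact Finset.card_le_card (Finset.union_subset Finset.inter_subset_left hN)

namespace IsSeparation

theorem neighborFinset_subset (h : IsSeparation G T T') {v : V} (hv : v ∉ T') :
    G.neighborFinset v ⊆ T := by
  intro x hx
  by_contra hxT
  exact h.not_adj v hv x hxT (by simpa using hx)

theorem degree_lt_card_left (h : IsSeparation G T T') (hd : ∀ v, d ≤ G.degree v) :
    d < T.card := by
  obtain ⟨v, hv, hv'⟩ := Finset.not_subset.1 h.not_subset_left
  have := card_inter_add_degree_le (I := {v}) (by simp [IsIndepSet]) (Finset.mem_singleton_self v)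
    (h.neighborFinset_subset hv')
  rw [Finset.inter_singleton_of_mem hv, Finset.card_singleton] at this
  have := hd v
  omega

theorem three_mul_lt_of_subset_left (h : IsSeparation G T T') (hd : ∀ v, d ≤ G.degree v)
    (hI : G.IsIndepSet I) (hdI : d < I.card) (hIT : I ⊆ T) : 3 * d < T.card + T'.card := by
  by_cases hIT' : I ⊆ T'
  · obtain ⟨v, hv⟩ := Finset.card_pos.1 (by omega : 0 < I.card)
    have hcard := card_inter_add_degree_le (T := Finset.univ) hI hv (Finset.subset_univ _)
    have hinter := Finset.card_le_card (Finset.subset_inter hIT hIT')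
    have hsum := Finset.card_union_add_card_inter T T'
    have := hd v
    rw [Finset.univ_inter, ← h.union_eq] at hcard
    omega
  · obtain ⟨v, hv, hv'⟩ := Finset.not_subset.1 hIT'
    have hcard := card_inter_add_degree_le hI hv (h.neighborFinset_subset hv')
    have hright := h.symm.degree_lt_card_left hd
    have := hd v
    rw [Finset.inter_eq_right.2 hIT] at hcard
    omega

theorem three_mul_lt_card_add_card (h : IsSeparation G T T') (hd : ∀ v, d ≤ G.degree v)
    (hI : G.IsIndepSet I) (hdI : d < I.card) : 3 * d < T.card + T'.card := by
  by_cases hIT : I ⊆ T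
  · exact h.three_mul_lt_of_subset_left hd hI hdI hIT
  by_cases hIT' : I ⊆ T'
  · have := h.symm.three_mul_lt_of_subset_left hd hI hdI hIT'
    omega
  · obtain ⟨a, ha, haT'⟩ := Finset.not_subset.1 hIT'
    obtain ⟨b, hb, hbT⟩ := Finset.not_subset.1 hIT
    have hleft := card_inter_add_degree_le hI ha (h.neighborFinset_subset haT')
    have hright := card_inter_add_degree_le hI hb (h.symm.neighborFinset_subset hbT)
    have hcover : I.card ≤ (T ∩ I).card + (T' ∩ I).card := by
      have := Finset.card_union_le (T ∩ I) (T' ∩ I)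
      rwa [← Finset.union_inter_distrib_right, h.union_eq, Finset.univ_inter] at this
    have := hd a
    have := hd b
    omega

end IsSeparation

theorem three_mul_lt_card_add_of_isIndepSet {k : ℕ} (hk : ¬ KConnected G (k + 1))
    (hd : ∀ v, d ≤ G.degree v) (hI : G.IsIndepSet I) (hdI : d < I.card) :
    3 * d < Fintype.card V + k := by
  by_cases hcard : k + 1 < Fintype.card V
  · obtain ⟨T, T', hT, hle⟩ := exists_isSeparation_of_not_kConnected hk hcard
    exact (hT.three_mul_lt_card_add_card hd hI hdI).trans_le hle
  · obtain ⟨v, hv⟩ := Finset.card_pos.1 (by omega : 0 < I.card)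
    have := card_inter_add_degree_le (T := Finset.univ) hI hv (Finset.subset_univ _)
    rw [Finset.univ_inter, Finset.card_univ] at this
    have := hd v
    omega

end Separation

theorem eq_of_mem_support_of_mem_support {u v w x : V} {p : G.Walk u v} {q : G.Walk v w}
    (hpq : (p.append q).IsPath) (hp : x ∈ p.support) (hq : x ∈ q.support) : x = v := by
  by_contra hx
  exact hpq.ne_of_mem_support_of_append hx hp hq rfl

theorem exists_eq_append_of_mem {u v x : V} {p : G.Walk u v} {A : Set V} (hx : x ∈ p.support)
    (hxA : x ∈ A) : ∃ r ∈ A, ∃ (q : G.Walk u r) (s : G.Walk r v), p = q.append s ∧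
      ∀ y ∈ q.support, y ∈ A → y = r := by
  induction p with
  | nil =>
    obtain rfl : x = _ := by simpa using hx
    exact ⟨x, hxA, nil, nil, rfl, by simp⟩
  | @cons u _ _ h p ih =>
    by_cases hu : u ∈ A
    · exact ⟨u, hu, nil, cons h p, rfl, by simp⟩
    · obtain rfl | hxp : x = u ∨ x ∈ p.support := by simpa using hx
      · exact absurd hxA hu
      · obtain ⟨r, hr, q, s, rfl, hq⟩ := ih hxp
        refine ⟨r, hr, cons h q, s, rfl, fun y hy hyA => ?_⟩
        obtain rfl | hyq : y = u ∨ y ∈ q.support := by simpa using hy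
        · exact absurd hyA hu
        · exact hq y hyq hyA

theorem exists_isPath_between {a b : V} {A B : Set V} (p : G.Walk a b) (ha : a ∈ A)
    (hb : b ∈ B) : ∃ a' ∈ A, ∃ b' ∈ B, ∃ q : G.Walk a' b', q.IsPath ∧ q.support ⊆ p.support ∧
      (∀ x ∈ q.support, x ∈ A → x = a') ∧ ∀ x ∈ q.support, x ∈ B → x = b' := by
  classical
  obtain ⟨b', hb', q, s, hqs, hq⟩ := exists_eq_append_of_mem p.bypass.end_mem_support hb
  obtain ⟨a', ha', t, t', htt', ht⟩ := exists_eq_append_of_mem q.reverse.end_mem_support ha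
  have hsub : ∀ x ∈ t.support, x ∈ q.support := by
    intro x hx
    have : x ∈ q.reverse.support := by simp [htt', hx]
    simpa using this
  refine ⟨a', ha', b', hb', t.reverse, ?_, ?_, by simpa using ht, ?_⟩
  · have hpath : (q.append s).IsPath := hqs ▸ p.bypass_isPath
    exact (htt' ▸ hpath.of_append_left.reverse : (t.append t').IsPath).of_append_left.reverse
  · intro x hx
    refine p.support_bypass_subset_support ?_
    rw [hqs]
    simp [hsub x (by simpa using hx)]
  · exact fun x hx => hq x (hsub x (by simpa using hx))

theorem exists_walk_notMem_support {a b r : V} (hr : (G.induce {r}ᶜ).Preconnected) (ha : a ≠ r)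
    (hb : b ≠ r) : ∃ p : G.Walk a b, r ∉ p.support := by
  obtain ⟨p⟩ := hr ⟨a, ha⟩ ⟨b, hb⟩
  refine ⟨p.map (Embedding.induce _).toHom, fun hmem => ?_⟩
  obtain ⟨x, -, hx⟩ := List.mem_map.1 (p.support_map _ ▸ hmem)
  exact x.2 hx

/-- Every vertex of `D` other than the root `r` is joined to `r` by a path inside `D` of length at
least `k`. Entering `D` at `r` and leaving it anywhere else thus costs at least `k` edges. -/
structure IsDeepAt (G : SimpleGraph V) (k : ℕ) (D : Set V) (r : V) : Prop where
  root_mem : r ∈ D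
  exists_isPath : ∀ x ∈ D, x ≠ r → ∃ p : G.Walk r x, p.IsPath ∧ (∀ y ∈ p.support, y ∈ D) ∧
    k ≤ p.length

theorem exists_isPath_of_isPath_triangle {b s t x : V} {p : G.Walk b s} {q : G.Walk b t}
    {m : G.Walk s t} (hp : p.IsPath) (hq : q.IsPath) (hm : m.IsPath)
    (hpm : ∀ y ∈ p.support, y ∈ m.support → y = s) (hqm : ∀ y ∈ q.support, y ∈ m.support → y = t)
    (hpq : ∀ y ∈ p.support, y ∈ q.support → y = b) (hx : x ∈ q.support) (hxb : x ≠ b) :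
    ∃ w : G.Walk b x, w.IsPath ∧ m.length ≤ w.length ∧
      ∀ y ∈ w.support, y ∈ m.support ∨ y ∈ p.support ∨ y ∈ q.support := by
  obtain ⟨q₁, q₂, rfl⟩ := mem_support_iff_exists_append.1 hx
  have hsub : ∀ y ∈ q₂.support, y ∈ (q₁.append q₂).support := by simp +contextual
  have hb : b ∉ q₂.support := fun hb =>
    hxb (eq_of_mem_support_of_mem_support hq q₁.start_mem_support hb).symm
  have hmq : (m.append q₂.reverse).IsPath :=
    isPath_append hm hq.of_append_right.reverse fun y hy hy' =>
      hqm y (hsub y (by simpa using hy')) hy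
  refine ⟨p.append (m.append q₂.reverse), isPath_append hp hmq fun y hy hy' => ?_, ?_, ?_⟩
  · obtain hym | hyq : y ∈ m.support ∨ y ∈ q₂.support := by simpa using hy'
    · exact hpm y hy hym
    · exact absurd (hpq y hy (hsub y hyq) ▸ hyq) hb
  · simp only [length_append]
    omega
  · simp only [mem_support_append_iff, support_reverse, List.mem_reverse]
    tauto

namespace IsDeepAt

variable {C D : Set V} {k : ℕ} {r a b c : V}

theorem union_support (h : IsDeepAt G k D r) {p : G.Walk b r} {q : G.Walk b a} (hp : p.IsPath)
    (hq : q.IsPath) (ha : a ∈ D) (har : a ≠ r) (hpD : ∀ x ∈ p.support, x ∈ D → x = r)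
    (hqD : ∀ x ∈ q.support, x ∈ D → x = a) (hpq : ∀ x ∈ p.support, x ∈ q.support → x = b) :
    IsDeepAt G k {x | x ∈ D ∨ x ∈ p.support ∨ x ∈ q.support} b where
  root_mem := .inr (.inl p.start_mem_support)
  exists_isPath x hx hxb := by
    obtain ⟨m, hm, hmD, hkm⟩ := h.exists_isPath a ha har
    have hpm : ∀ y ∈ p.support, y ∈ m.support → y = r := fun y hy hym => hpD y hy (hmD y hym)
    have hqm : ∀ y ∈ q.support, y ∈ m.support → y = a := fun y hy hym => hqD y hy (hmD y hym)
    have hcases : x ∈ p.support ∨ x ∈ q.support ∨ x ∈ D ∧ x ≠ r := by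
      by_cases hxr : x = r
      · exact .inl (hxr ▸ p.end_mem_support)
      · rcases hx with hx | hx | hx <;> simp [hx, hxr]
    obtain hxp | hxq | ⟨hxD, hxr⟩ := hcases
    · obtain ⟨w, hw, hmw, hwsub⟩ := exists_isPath_of_isPath_triangle hq hp hm.reverse
        (by simpa using hqm) (by simpa using hpm) (fun y hyq hyp => hpq y hyp hyq) hxp hxb
      refine ⟨w, hw, fun y hy => ?_, hkm.trans (by simpa using hmw)⟩
      obtain hym | hyq | hyp := hwsub y hy
      · exact .inl (hmD y (by simpa using hym))
      · exact .inr (.inr hyq)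
      · exact .inr (.inl hyp)
    · obtain ⟨w, hw, hmw, hwsub⟩ :=
        exists_isPath_of_isPath_triangle hp hq hm hpm hqm hpq hxq hxb
      exact ⟨w, hw, fun y hy => (hwsub y hy).imp_left (hmD y), hkm.trans hmw⟩
    · obtain ⟨w, hw, hwD, hkw⟩ := h.exists_isPath x hxD hxr
      refine ⟨p.append w, isPath_append hp hw fun y hy hyw => hpD y hy (hwD y hyw), ?_, ?_⟩
      · intro y hy
        obtain hyp | hyw := (mem_support_append_iff _ _).1 hy
        · exact .inr (.inl hyp)
        · exact .inl (hwD y hyw)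
      · rw [length_append]
        omega

theorem isEar_append (hC : c ∈ C) {T : G.Walk c r} {P : G.Walk r a} {W : G.Walk a b}
    (hT : T.IsPath) (hP : P.IsPath) (hW : W.IsPath) (hb : b ∈ C) (hbT : b ∉ T.support)
    (hPD : ∀ x ∈ P.support, x ∈ D) (hTC : ∀ x ∈ T.support, x ∈ C → x = c)
    (hTD : ∀ x ∈ T.support, x ∈ D → x = r) (hDC : ∀ x ∈ D, x ∈ C → x = r)
    (hWD : ∀ x ∈ W.support, x ∈ D → x = a) (hWB : ∀ x ∈ W.support, x ∈ C ∨ x ∈ T.support → x = b) :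
    IsEar C (T.append (P.append W)) where
  isPath := by
    refine isPath_append hT (isPath_append hP hW fun x hxP hxW => hWD x hxW (hPD x hxP)) ?_
    intro x hxT hx
    obtain hxP | hxW := (mem_support_append_iff _ _).1 hx
    · exact hTD x hxT (hPD x hxP)
    · exact absurd (hWB x hxW (.inr hxT) ▸ hxT) hbT
  start_mem := hC
  end_mem := hb
  ne := fun hcb => hbT (hcb ▸ T.start_mem_support)
  eq_or_eq x hx hxC := by
    obtain hxT | hxP | hxW : x ∈ T.support ∨ x ∈ P.support ∨ x ∈ W.support := by simpa using hx
    · exact .inl (hTC x hxT hxC)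
    · obtain rfl := hDC x (hPD x hxP) hxC
      exact .inl (hTC _ T.end_mem_support hxC)
    · exact .inr (hWB x hxW (.inl hxC))

theorem exists_isDeepAt_of_append (h : IsDeepAt G k D r) {T₁ : G.Walk c b} {T₂ : G.Walk b r}
    {W : G.Walk a b} (hT : (T₁.append T₂).IsPath) (hW : W.IsPath) (ha : a ∈ D) (har : a ≠ r)
    (hTC : ∀ x ∈ (T₁.append T₂).support, x ∈ C → x = c)
    (hTD : ∀ x ∈ (T₁.append T₂).support, x ∈ D → x = r) (hDC : ∀ x ∈ D, x ∈ C → x = r)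
    (hWD : ∀ x ∈ W.support, x ∈ D → x = a)
    (hWB : ∀ x ∈ W.support, x ∈ C ∨ x ∈ (T₁.append T₂).support → x = b) :
    ∃ D' : Set V, IsDeepAt G k D' b ∧ r ∈ D' ∧ (∀ x ∈ T₁.support, x ∈ D' → x = b) ∧
      ∀ x ∈ D', x ∈ C → x = b := by
  have hmem₁ : ∀ x ∈ T₁.support, x ∈ (T₁.append T₂).support := by simp +contextual
  have hmem₂ : ∀ x ∈ T₂.support, x ∈ (T₁.append T₂).support := by simp +contextual
  have hinter : ∀ x ∈ T₁.support, x ∈ T₂.support → x = b := fun x hx₁ hx₂ =>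
    eq_of_mem_support_of_mem_support hT hx₁ hx₂
  have hT₂C : ∀ x ∈ T₂.support, x ∈ C → x = b := fun x hx hxC =>
    hinter x (hTC x (hmem₂ x hx) hxC ▸ T₁.start_mem_support) hx
  refine ⟨_, h.union_support hT.of_append_right hW.reverse ha har
    (fun x hx => hTD x (hmem₂ x hx)) (by simpa using hWD)
    (fun x hx hxW => hWB x (by simpa using hxW) (.inr (hmem₂ x hx))), .inl h.root_mem, ?_, ?_⟩
  · rintro x hx (hxD | hxT | hxW)
    · obtain rfl := hTD x (hmem₁ x hx) hxD
      exact hinter _ hx T₂.end_mem_support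
    · exact hinter x hx hxT
    · exact hWB x (by simpa using hxW) (.inr (hmem₁ x hx))
  · rintro x (hxD | hxT | hxW) hxC
    · obtain rfl := hDC x hxD hxC
      exact hT₂C _ T₂.end_mem_support hxC
    · exact hT₂C x hxT hxC
    · exact hWB x (by simpa using hxW) (.inl hxC)

-- A path leaving `D` off its root that hits `C` away from `T` closes the ear; if it hits `T` first,
-- at `b`, then `D` grows to a larger deep set rooted at `b` and `T` gets shorter.
theorem exists_isEar (hG : ∀ r, (G.induce {r}ᶜ).Preconnected) (hC : C.Nontrivial)
    (h : IsDeepAt G k D r) (hD : D.Nontrivial) (T : G.Walk c r) (hT : T.IsPath) (hc : c ∈ C)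
    (hTC : ∀ x ∈ T.support, x ∈ C → x = c) (hTD : ∀ x ∈ T.support, x ∈ D → x = r)
    (hDC : ∀ x ∈ D, x ∈ C → x = r) :
    ∃ (u v : V) (p : G.Walk u v), IsEar C p ∧ k ≤ p.length := by
  induction hn : T.length using Nat.strong_induction_on generalizing D r with
  | _ n ih =>
    obtain ⟨d, hd, hdr⟩ := hD.exists_ne r
    obtain ⟨c', hc', hcr⟩ := hC.exists_ne r
    obtain ⟨p, hrp⟩ := exists_walk_notMem_support (hG r) hdr hcr
    obtain ⟨a, ha, b, hb, W, hW, hWp, hWD, hWB⟩ :=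
      exists_isPath_between (B := {x | x ∈ C ∨ x ∈ T.support}) p hd (.inl hc')
    have har : a ≠ r := fun har => hrp (har ▸ hWp W.start_mem_support)
    have hbr : b ≠ r := fun hbr => hrp (hbr ▸ hWp W.end_mem_support)
    by_cases hbT : b ∈ T.support
    · obtain ⟨T₁, T₂, rfl⟩ := mem_support_iff_exists_append.1 hbT
      have hT₂ : 0 < T₂.length := not_nil_iff_lt_length.1 (not_nil_of_ne hbr)
      obtain ⟨D', hD', hrD', hT₁D', hD'C⟩ :=
        h.exists_isDeepAt_of_append hT hW ha har hTC hTD hDC hWD hWB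
      exact ih T₁.length (by rw [← hn, length_append]; omega) hD'
        ⟨r, hrD', b, hD'.root_mem, hbr.symm⟩ T₁ hT.of_append_left
        (fun x hx => hTC x ((mem_support_append_iff _ _).2 (.inl hx))) hT₁D' hD'C rfl
    · obtain ⟨P, hP, hPD, hkP⟩ := h.exists_isPath a ha har
      refine ⟨c, b, _, isEar_append hc hT hP hW (hb.resolve_right hbT) hbT hPD hTC hTD hDC hWD hWB,
        ?_⟩
      simp only [length_append]
      omega

end IsDeepAt

theorem degree_le_length_add_card {u v y : V} {p : G.Walk u v} {S : Finset V}
    [Fintype (G.neighborSet y)] (hy : y ∈ p.support)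
    (hN : ∀ x, G.Adj y x → x ∈ p.support ∨ x ∈ S) : G.degree y ≤ p.length + S.card := by
  classical
  have hsub : insert y (G.neighborFinset y) ⊆ p.support.toFinset ∪ S := by
    refine Finset.insert_subset (by simp [hy]) fun x hx => ?_
    simpa using hN x (by simpa using hx)
  have hsupp := p.support.toFinset_card_le
  rw [length_support] at hsupp
  have hcard := (Finset.card_le_card hsub).trans (Finset.card_union_le _ _)
  rw [Finset.card_insert_of_notMem (by simp), card_neighborFinset_eq_degree] at hcard
  omega

-- The path runs from `r` to the last neighbour of `y` before `w`, jumps to `y` and returns to `w`,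
-- so it still contains all neighbours of `y`.
theorem exists_isPath_degree_le_length {r w y : V} [Fintype (G.neighborSet y)] {s : G.Walk r w}
    {t : G.Walk w y} (h : (s.append t).IsPath) (hwr : w ≠ r) (hr : G.Adj y r)
    (hN : ∀ x, G.Adj y x → x ∈ (s.append t).support) :
    ∃ p : G.Walk r w, p.IsPath ∧ (∀ x ∈ p.support, x ∈ (s.append t).support) ∧
      G.degree y ≤ p.length := by
  obtain ⟨f, ⟨hyf, hfw⟩, e, g, heg, he⟩ := exists_eq_append_of_mem (A := {x | G.Adj y x ∧ x ≠ w})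
    s.reverse.end_mem_support ⟨hr, hwr.symm⟩
  have hs : ∀ x, x ∈ s.support ↔ x ∈ e.support ∨ x ∈ g.support := fun x => by
    rw [← mem_support_append_iff, ← heg, support_reverse, List.mem_reverse]
  have heg_path : (e.append g).IsPath := heg ▸ h.of_append_left.reverse
  have hgt : ∀ x ∈ g.support, x ∉ t.support := by
    intro x hxg hxt
    obtain rfl := eq_of_mem_support_of_mem_support h ((hs x).2 (.inr hxg)) hxt
    exact hfw (eq_of_mem_support_of_mem_support heg_path e.start_mem_support hxg).symm
  let p := g.reverse.append (cons hyf.symm t.reverse)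
  have hp : ∀ x, x ∈ p.support ↔ x ∈ g.support ∨ x ∈ t.support := by
    have := g.start_mem_support
    intro x
    simp only [p, mem_support_append_iff, support_reverse, support_cons, List.mem_cons,
      List.mem_reverse]
    grind
  refine ⟨p, isPath_append heg_path.of_append_right.reverse ?_ ?_, ?_, ?_⟩
  · exact h.of_append_right.reverse.cons (by simpa using hgt f g.start_mem_support)
  · intro x hxg hx
    obtain hxf | hxt : x = f ∨ x ∈ t.support := by simpa using hx
    · exact hxf
    · exact absurd hxt (hgt x (by simpa using hxg))
  · intro x hx
    rw [mem_support_append_iff, hs]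
    exact ((hp x).1 hx).imp_left .inr
  · refine degree_le_length_add_card (S := ∅) ((hp y).2 (.inr t.end_mem_support)) fun x hyx => ?_
    refine .inl ((hp x).2 ?_)
    obtain hxs | hxt := (mem_support_append_iff _ _).1 (hN x hyx)
    · obtain hxe | hxg := (hs x).1 hxs
      · by_cases hxw : x = w
        · exact .inr (hxw ▸ t.start_mem_support)
        · exact .inl (he x hxe ⟨hyx, hxw⟩ ▸ g.start_mem_support)
      · exact .inl hxg
    · exact .inr hxt

theorem exists_isDeepAt_of_neighbors_subset {u y : V} [Fintype (G.neighborSet y)] {q : G.Walk u y}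
    (hq : q.IsPath) (hy : 0 < G.degree y) (hN : ∀ x, G.Adj y x → x ∈ q.support) :
    ∃ (r : V) (q₁ : G.Walk u r) (q₂ : G.Walk r y), q = q₁.append q₂ ∧ G.Adj y r ∧
      IsDeepAt G (G.degree y) {x | x ∈ q₂.support} r := by
  obtain ⟨z, hyz⟩ := (G.degree_pos_iff_exists_adj y).1 hy
  obtain ⟨r, hyr, q₁, q₂, rfl, hfirst⟩ :=
    exists_eq_append_of_mem (A := G.neighborSet y) (hN z hyz) hyz
  have hN₂ : ∀ x, G.Adj y x → x ∈ q₂.support := by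
    intro x hyx
    obtain hx₁ | hx₂ := (mem_support_append_iff _ _).1 (hN x hyx)
    · exact hfirst x hx₁ hyx ▸ q₂.start_mem_support
    · exact hx₂
  refine ⟨r, q₁, q₂, rfl, hyr, q₂.start_mem_support, fun w hw hwr => ?_⟩
  obtain ⟨s, t, rfl⟩ := mem_support_iff_exists_append.1 hw
  exact exists_isPath_degree_le_length hq.of_append_right hwr hyr hN₂

theorem exists_isEar_degree_le_length {C : Set V} {c y : V} [Fintype (G.neighborSet y)]
    {q : G.Walk c y} (hG : ∀ r, (G.induce {r}ᶜ).Preconnected) (hC : C.Nontrivial) (hq : q.IsPath)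
    (hc : c ∈ C) (hqC : ∀ x ∈ q.support, x ∈ C → x = c) (hy : 0 < G.degree y)
    (hN : ∀ x, G.Adj y x → x ∈ q.support) :
    ∃ (u v : V) (p : G.Walk u v), IsEar C p ∧ G.degree y ≤ p.length := by
  obtain ⟨r, q₁, q₂, rfl, hyr, hdeep⟩ := exists_isDeepAt_of_neighbors_subset hq hy hN
  refine hdeep.exists_isEar hG hC ⟨y, q₂.end_mem_support, r, q₂.start_mem_support, hyr.ne⟩ q₁
    hq.of_append_left hc (fun x hx => hqC x ((mem_support_append_iff _ _).2 (.inl hx)))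
    (fun x hx₁ hx₂ => eq_of_mem_support_of_mem_support hq hx₁ hx₂) fun x hx hxC => ?_
  obtain rfl := hqC x ((mem_support_append_iff _ _).2 (.inr hx)) hxC
  exact eq_of_mem_support_of_mem_support hq q₁.start_mem_support hx

/-- `p` is a longest path among those that lie inside `A` and start in `S`. -/
structure IsLongestPathIn (A S : Set V) {x y : V} (p : G.Walk x y) : Prop where
  isPath : p.IsPath
  support_subset : ∀ z ∈ p.support, z ∈ A
  start_mem : x ∈ S
  length_le : ∀ ⦃x' y' : V⦄ (q : G.Walk x' y'), q.IsPath → (∀ z ∈ q.support, z ∈ A) → x' ∈ S →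
    q.length ≤ p.length

theorem exists_isLongestPathIn (G : SimpleGraph V) [Finite V] {A S : Set V} {x : V}
    (hxA : x ∈ A) (hxS : x ∈ S) :
    ∃ (u v : V) (p : G.Walk u v), IsLongestPathIn A S p := by
  have := Fintype.ofFinite V
  let lengths := {n | ∃ (u v : V) (p : G.Walk u v), (p.IsPath ∧ (∀ z ∈ p.support, z ∈ A) ∧ u ∈ S) ∧
    p.length = n}
  have hbdd : BddAbove lengths := by
    refine ⟨Fintype.card V, ?_⟩
    rintro _ ⟨u, v, p, hp, rfl⟩
    exact hp.1.length_lt.le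
  obtain ⟨u, v, p, hp, hlen⟩ := Nat.sSup_mem (s := lengths)
    ⟨0, x, x, nil, ⟨.nil, by simpa using hxA, hxS⟩, rfl⟩ hbdd
  exact ⟨u, v, p, hp.1, hp.2.1, hp.2.2, fun x' y' q hq hqA hqS =>
    hlen ▸ le_csSup hbdd ⟨x', y', q, ⟨hq, hqA, hqS⟩, rfl⟩⟩

namespace IsLongestPathIn

variable {A S : Set V} {x y : V} {p : G.Walk x y}

theorem mem_support_of_adj (h : IsLongestPathIn A S p) {z : V} (hz : z ∈ A) (hyz : G.Adj y z) :
    z ∈ p.support := by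
  by_contra hzp
  have hlen := h.length_le (p.concat hyz) (h.isPath.concat hzp hyz)
    (fun v hv => by
      obtain hvp | rfl : v ∈ p.support ∨ v = z := by simpa [support_concat] using hv
      · exact h.support_subset v hvp
      · exact hz) h.start_mem
  rw [length_concat] at hlen
  omega

theorem notMem_of_adj_of_length_eq_zero (h : IsLongestPathIn A S p) (hp : p.length = 0) {z : V}
    (hyz : G.Adj y z) : z ∉ A := by
  intro hz
  have := h.mem_support_of_adj hz hyz
  cases p with
  | nil => exact hyz.ne' (by simpa using this)
  | cons => simp at hp

protected theorem reverse (h : IsLongestPathIn A Set.univ p) :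
    IsLongestPathIn A Set.univ p.reverse where
  isPath := h.isPath.reverse
  support_subset z hz := h.support_subset z (by simpa using hz)
  start_mem := Set.mem_univ _
  length_le := by simpa using h.length_le

end IsLongestPathIn

namespace IsLongestCycle

variable {a : V} {w : G.Walk a a}

theorem two_mul_card_union_add_mul_max_le_of_isPath [DecidableEq V] {x y x₀ y₀ : V} {p : G.Walk x y}
    {X Y : Finset V} (h : IsLongestCycle w) (hp : p.IsPath) (hpw : ∀ z ∈ p.support, z ∉ w.support)
    (hX : ∀ u ∈ X, u ∈ w.support ∧ G.Adj x u) (hY : ∀ v ∈ Y, v ∈ w.support ∧ G.Adj y v)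
    (hx₀ : x₀ ∈ X) (hy₀ : y₀ ∈ Y) (hne : x₀ ≠ y₀) :
    2 * (X ∪ Y).card + p.length * max 2 (X ∩ Y).card ≤ w.length := by
  have hear : ∀ {s t : V} (q : G.Walk s t), q.IsPath → (∀ z ∈ q.support, z ∉ w.support) →
      ∀ u v, u ∈ w.support ∧ G.Adj s u → v ∈ w.support ∧ G.Adj t v → u ≠ v →
      ∃ e : G.Walk u v, IsEar {x | x ∈ w.support} e ∧ q.length + 2 ≤ e.length :=
    fun q hq hqw u v hu hv huv =>
      ⟨_, isEar_cons_concat hq hqw hu.1 hv.1 huv hu.2.symm hv.2, by simp⟩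
  refine h.two_mul_card_union_add_mul_max_le ?_ hx₀ hy₀ hne ?_
    fun u hu v hv => hear p hp hpw u v (hX u hu) (hY v hv)
  · intro u hu
    exact (Finset.mem_union.1 hu).elim (fun hu => (hX u hu).1) (fun hu => (hY u hu).1)
  · intro u hu v hv huv
    suffices ∃ (e : G.Walk u v) (n : ℕ), IsEar {x | x ∈ w.support} e ∧ n + 2 ≤ e.length by
      obtain ⟨e, n, he, hn⟩ := this
      exact ⟨e, he, by omega⟩
    have hx : ∀ z ∈ (nil : G.Walk x x).support, z ∉ w.support := by
      simpa using hpw x p.start_mem_support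
    have hy : ∀ z ∈ (nil : G.Walk y y).support, z ∉ w.support := by
      simpa using hpw y p.end_mem_support
    have hpw' : ∀ z ∈ p.reverse.support, z ∉ w.support := by simpa using hpw
    obtain hu | hu := Finset.mem_union.1 hu <;> obtain hv | hv := Finset.mem_union.1 hv
    · exact (hear nil .nil hx u v (hX u hu) (hX v hv) huv).imp fun e he => ⟨_, he⟩
    · exact (hear p hp hpw u v (hX u hu) (hY v hv) huv).imp fun e he => ⟨_, he⟩
    · exact (hear p.reverse hp.reverse hpw' u v (hY u hu) (hX v hv) huv).imp fun e he => ⟨_, he⟩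
    · exact (hear nil .nil hy u v (hY u hu) (hY v hv) huv).imp fun e he => ⟨_, he⟩

end IsLongestCycle

theorem length_add_length_lt_card [Fintype V] {a x y : V} {w : G.Walk a a}
    {p : G.Walk x y} (hw : w.IsCycle) (hp : p.IsPath) (hpw : ∀ z ∈ p.support, z ∉ w.support) :
    w.length + p.length < Fintype.card V := by
  have hnodup : (w.support.tail ++ p.support).Nodup :=
    List.nodup_append'.2 ⟨hw.support_nodup, hp.support_nodup,
      fun z hzw hzp => hpw z hzp (List.mem_of_mem_tail hzw)⟩
  simpa [← Nat.add_one_le_iff, add_assoc] using hnodup.length_le_card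

section Degree

variable [Fintype V] [DecidableRel G.Adj] {a v : V} {w : G.Walk a a} {d : ℕ}

theorem IsLongestPathIn.degree_le_length_add_card_inter [DecidableEq V] {x y : V} {p : G.Walk x y}
    {A S : Set V} {C : Finset V} (h : IsLongestPathIn A S p) (hAC : ∀ z ∉ C, z ∈ A) :
    G.degree y ≤ p.length + (G.neighborFinset y ∩ C).card := by
  refine degree_le_length_add_card p.end_mem_support fun z hyz => ?_
  by_cases hz : z ∈ C
  · exact .inr (by simp [hz, hyz])
  · exact .inl (h.mem_support_of_adj (hAC z hz) hyz)

namespace IsLongestCycle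

theorem two_mul_le_length (h : IsLongestCycle w) (hconn : G.Preconnected)
    (hcut : ∀ r, (G.induce {r}ᶜ).Preconnected) (hv : v ∉ w.support) (hd : ∀ v, d ≤ G.degree v) :
    2 * d ≤ w.length := by
  classical
  obtain ⟨p₀⟩ := hconn a v
  obtain ⟨e, -, he, he'⟩ :=
    p₀.exists_boundary_dart {x | x ∈ w.support} w.start_mem_support hv
  obtain ⟨x, y, p, hp⟩ := exists_isLongestPathIn G (A := {z | z ∉ w.support})
    (S := {x | ∃ c ∈ w.support, G.Adj c x}) he' ⟨e.fst, he, e.adj⟩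
  obtain ⟨c, hc, hcx⟩ := hp.start_mem
  have hpw : ∀ z ∈ p.support, z ∉ w.support := hp.support_subset
  by_cases hz : ∃ z ∈ w.support, z ≠ c ∧ G.Adj y z
  · obtain ⟨z, hz, hzc, hyz⟩ := hz
    have hgap := h.two_mul_card_union_add_mul_max_le_of_isPath (X := {c})
      (Y := G.neighborFinset y ∩ w.support.toFinset) hp.isPath hpw (by simp [hc, hcx.symm])
      (by simp +contextual) (Finset.mem_singleton_self c) (by simp [hz, hyz]) hzc.symm
    have hdeg := hp.degree_le_length_add_card_inter (C := w.support.toFinset) (by simp)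
    have hunion := Finset.card_le_card (Finset.subset_union_right (s₁ := {c})
      (s₂ := G.neighborFinset y ∩ w.support.toFinset))
    calc 2 * d ≤ 2 * (G.neighborFinset y ∩ w.support.toFinset).card + p.length * 2 := by
          have := hd y
          omega
      _ ≤ _ := by gcongr; exact le_max_left _ _
      _ ≤ w.length := hgap
  · push Not at hz
    have hypos : 0 < G.degree y :=
      (hconn y c).degree_pos_left fun hyc => hpw y p.end_mem_support (hyc ▸ hc)
    have hN : ∀ z, G.Adj y z → z ∈ (cons hcx p).support := by
      intro z hyz
      by_cases hzw : z ∈ w.support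
      · simp [not_imp_comm.1 (hz z hzw) (not_not.2 hyz)]
      · simp [hp.mem_support_of_adj hzw hyz]
    have hw : {x | x ∈ w.support}.Nontrivial :=
      ⟨a, w.start_mem_support, w.snd, w.getVert_mem_support 1, (w.adj_snd h.1.not_nil).ne⟩
    obtain ⟨u, v, q, hq, hyq⟩ := exists_isEar_degree_le_length (q := cons hcx p) hcut hw
      (hp.isPath.cons fun hcp => hpw c hcp hc) hc (by simp +contextual [hpw]) hypos hN
    have := h.two_mul_length_le_of_isEar hq
    have := hd y
    omega

theorem three_mul_le_card_add_one {x y : V} {p : G.Walk x y} (h : IsLongestCycle w)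
    (hp : IsLongestPathIn {z | z ∉ w.support} Set.univ p) (hp_pos : 0 < p.length)
    (hd : ∀ v, d ≤ G.degree v) (hw : 2 * d ≤ w.length) : 3 * d ≤ Fintype.card V + 1 := by
  classical
  by_contra! hlt
  let X := G.neighborFinset x ∩ w.support.toFinset
  let Y := G.neighborFinset y ∩ w.support.toFinset
  have hX : d ≤ p.length + X.card := by
    simpa using (hd x).trans (hp.reverse.degree_le_length_add_card_inter (by simp))
  have hY : d ≤ p.length + Y.card :=
    (hd y).trans (hp.degree_le_length_add_card_inter (by simp))
  have hcard := length_add_length_lt_card h.1 hp.isPath hp.support_subset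
  obtain ⟨x₀, hx₀⟩ : X.Nonempty := Finset.card_pos.1 (by omega)
  obtain ⟨y₀, hy₀, hne⟩ : ∃ y₀ ∈ Y, y₀ ≠ x₀ := Finset.exists_mem_ne (by omega) x₀
  have hgap := h.two_mul_card_union_add_mul_max_le_of_isPath (X := X) (Y := Y) hp.isPath
    hp.support_subset (by simp +contextual [X]) (by simp +contextual [Y]) hx₀ hy₀ hne.symm
  have hunion := Finset.card_union_add_card_inter X Y
  have hinter := Finset.card_le_card (Finset.inter_subset_left (s₁ := X) (s₂ := Y))
  generalize p.length = l at *
  generalize (X ∩ Y).card = m at *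
  obtain rfl | hl := Nat.eq_or_lt_of_le hp_pos
  · omega
  · obtain ⟨t, rfl⟩ := Nat.exists_eq_add_of_le hl
    have ht : t * 2 ≤ t * max 2 m := by gcongr; exact le_max_left _ _
    rw [add_mul] at hgap
    omega

theorem exists_neighbors_subset (h : IsLongestCycle w) (hv : v ∉ w.support)
    (hd : ∀ v, d ≤ G.degree v) (hn : Fintype.card V + 2 ≤ 3 * d) (hw : 2 * d ≤ w.length) :
    ∃ x ∉ w.support, ∀ y, G.Adj x y → y ∈ w.support := by
  obtain ⟨x, y, p, hp⟩ := exists_isLongestPathIn G (A := {z | z ∉ w.support}) (S := Set.univ) hv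
    (Set.mem_univ v)
  have hp0 : p.length = 0 := by
    by_contra! hp0
    have := h.three_mul_le_card_add_one hp (Nat.pos_of_ne_zero hp0) hd hw
    omega
  refine ⟨y, hp.support_subset y p.end_mem_support, fun z hyz => ?_⟩
  simpa using hp.notMem_of_adj_of_length_eq_zero hp0 hyz

end IsLongestCycle

end Degree

section Hamiltonian

theorem exists_isLongestCycle [Finite V] (hG : ¬ G.IsAcyclic) :
    ∃ (v : V) (w : G.Walk v v), IsLongestCycle w := by
  have := Fintype.ofFinite V
  let lengths := {n | ∃ (v : V) (w : G.Walk v v), w.IsCycle ∧ w.length = n}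
  have hbdd : BddAbove lengths := by
    refine ⟨Fintype.card V, ?_⟩
    rintro _ ⟨v, w, hw, rfl⟩
    simpa using hw.support_nodup.length_le_card
  obtain ⟨v, w, hw, hlen⟩ : sSup lengths ∈ lengths := by
    refine Nat.sSup_mem ?_ hbdd
    simp only [IsAcyclic, not_forall, not_not] at hG
    obtain ⟨v, w, hw⟩ := hG
    exact ⟨_, v, w, hw, rfl⟩
  exact ⟨v, w, hw, fun u w' hw' => hlen ▸ le_csSup hbdd ⟨u, w', hw', rfl⟩⟩

variable [Fintype V]

theorem not_isAcyclic_of_two_le_minDegree [DecidableRel G.Adj] (hG : G.Connected)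
    (hd : 2 ≤ G.minDegree) : ¬ G.IsAcyclic := by
  intro hacyc
  have := hG.nonempty
  have : Nontrivial V := by
    obtain ⟨v⟩ := hG.nonempty
    obtain ⟨u, hu⟩ := (G.degree_pos_iff_exists_adj v).1 (by have := G.minDegree_le_degree v; omega)
    exact ⟨v, u, hu.ne⟩
  have := IsTree.minDegree_eq_one_of_nontrivial ⟨hG, hacyc⟩
  omega

variable [DecidableEq V]

theorem isHamiltonian_of_forall_mem_support {v : V} {w : G.Walk v v} (hw : w.IsCycle)
    (hmem : ∀ x, x ∈ w.support) : G.IsHamiltonian := by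
  refine fun _ => ⟨v, w, isHamiltonianCycle_iff_isCycle_and_support_count_tail_eq_one.2
    ⟨hw, fun x => List.count_eq_one_of_mem hw.support_nodup ?_⟩⟩
  obtain rfl | hx := w.mem_support_iff.1 (hmem x)
  · exact end_mem_tail_support hw.not_nil
  · exact hx

theorem KConnected.le_connectivity {k : ℕ} (h : KConnected G k) : k ≤ connectivity G :=
  le_csSup ⟨Fintype.card V, fun _ hk => hk.1.le⟩ h

theorem KConnected.connected {k : ℕ} (h : KConnected G k) (hk : 0 < k) : G.Connected := by
  have := h.2 ∅ (by simpa using hk)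
  rw [Finset.coe_empty, Set.compl_empty] at this
  exact (induceUnivIso G).connected_iff.1 this

theorem KConnected.connected_induce_compl_singleton {k : ℕ} (h : KConnected G k) (hk : 1 < k)
    (r : V) : (G.induce {r}ᶜ).Connected :=
  Finset.coe_singleton r ▸ h.2 {r} (by simpa using hk)

end Hamiltonian

theorem nikoghosyan_1981_hamiltonian (G : SimpleGraph V) [Fintype V] [DecidableEq V] [DecidableRel G.Adj]
    (h2 : KConnected G 2)
    (hδ : (G.minDegree : ℝ) ≥ (Fintype.card V + connectivity G : ℝ) / 3) :
    G.IsHamiltonian := by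
  have hκ : 2 ≤ connectivity G := h2.le_connectivity
  have hδκ : Fintype.card V + connectivity G ≤ 3 * G.minDegree := by
    rify
    linarith
  have hconn : G.Connected := h2.connected two_pos
  have hcut : ∀ r, (G.induce {r}ᶜ).Preconnected := fun r =>
    (h2.connected_induce_compl_singleton one_lt_two r).preconnected
  have hn := h2.1
  obtain ⟨a, w, hw⟩ :=
    exists_isLongestCycle (not_isAcyclic_of_two_le_minDegree hconn (by omega))
  by_contra hham
  obtain ⟨v, hv⟩ : ∃ v, v ∉ w.support := by
    contrapose! hham
    exact isHamiltonian_of_forall_mem_support hw.1 hham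
  have hdirac := hw.two_mul_le_length hconn.preconnected hcut hv G.minDegree_le_degree
  obtain ⟨x, hx, hxN⟩ :=
    hw.exists_neighbors_subset hv G.minDegree_le_degree (by omega) hdirac
  obtain ⟨I, hI, hxI⟩ := hw.exists_isIndepSet_of_neighbors_subset hx hxN
  have hsep := three_mul_lt_card_add_of_isIndepSet
    (fun hk => (connectivity G).lt_irrefl hk.le_connectivity) G.minDegree_le_degree hI
    ((G.minDegree_le_degree x).trans_lt hxI)
  omega
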